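/- Let (A,m) be a multiarrangement of rank ℓ > 3 with two locally heavy hyperplanes H, L ∈ A, and suppose there exists a rank-3 flat X ⊆ H ∩ L such that the localization A_X is the product of an empty arrangement with an irreducible rank-3 arrangement. Then (A,m) is not free. -/

import Mathlib

open scoped Classical
open MvPolynomial

namespace ArrPaper

variable {K : Type*} [Field K] {ℓ : ℕ}

/-- The coordinate ring `S = K[x₁,…,x_ℓ]`. -/
noncomputable abbrev S (K : Type*) [Field K] (ℓ : ℕ) := MvPolynomial (Fin ℓ) K

/-- The linear form associated to a covector `c`. -/
noncomputable def linForm (c : Fin ℓ → K) : S K ℓ :=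
  ∑ i, MvPolynomial.C (c i) * MvPolynomial.X i

/-- The linear functional associated to a covector. -/
noncomputable def toFunc (c : Fin ℓ → K) : (Fin ℓ → K) →ₗ[K] K :=
  ∑ i, c i • LinearMap.proj i

/-- A (central) hyperplane arrangement, given by a finite set of nonzero,
pairwise non-proportional covectors (defining linear forms). -/
structure Arrangement (K : Type*) [Field K] (ℓ : ℕ) where
  hyps : Finset (Fin ℓ → K)
  ne_zero : ∀ c ∈ hyps, c ≠ 0
  nonparallel : ∀ c ∈ hyps, ∀ c' ∈ hyps, c ≠ c' → ∀ t : K, c' ≠ t • c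

/-- Derivations of the polynomial ring `S`. -/
abbrev Der (K : Type*) [Field K] (ℓ : ℕ) := Derivation K (S K ℓ) (S K ℓ)

/-- `θ` is a logarithmic derivation of the multiarrangement `(A, m)`, i.e.
`θ(α_H) ∈ α_H^{m(H)}·S` for all `H ∈ A`. -/
def IsLogDer (A : Arrangement K ℓ) (m : (Fin ℓ → K) → ℕ) (θ : Der K ℓ) : Prop :=
  ∀ c ∈ A.hyps, (linForm c) ^ (m c) ∣ θ (linForm c)

/-- `θ` is homogeneous of polynomial degree `d`: `θ(α)` is homogeneous of degree `d`
for every linear form `α`. -/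
def IsHomogOfDeg (θ : Der K ℓ) (d : ℕ) : Prop :=
  ∀ c : Fin ℓ → K, (θ (linForm c)).IsHomogeneous d

/-- `θ₁, …, θ_ℓ` form a basis of the `S`-module `D(A,m)`. -/
def IsDerBasis (A : Arrangement K ℓ) (m : (Fin ℓ → K) → ℕ) (θ : Fin ℓ → Der K ℓ) : Prop :=
  (∀ i, IsLogDer A m (θ i)) ∧
  ∀ η : Der K ℓ, IsLogDer A m η → ∃! f : Fin ℓ → S K ℓ, η = ∑ i, f i • θ i

/-- `(A,m)` is free with a homogeneous basis of degrees (exponents) `d`. -/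
def IsFreeWithExp (A : Arrangement K ℓ) (m : (Fin ℓ → K) → ℕ) (d : Fin ℓ → ℕ) : Prop :=
  ∃ θ : Fin ℓ → Der K ℓ, (∀ i, IsHomogOfDeg (θ i) (d i)) ∧ IsDerBasis A m θ

/-- `(A,m)` is a free multiarrangement. -/
def IsFree (A : Arrangement K ℓ) (m : (Fin ℓ → K) → ℕ) : Prop :=
  ∃ d : Fin ℓ → ℕ, IsFreeWithExp A m d

/-- `|m|`, the total multiplicity. -/
def msum (A : Arrangement K ℓ) (m : (Fin ℓ → K) → ℕ) : ℕ := ∑ c ∈ A.hyps, m c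

/-- The rank of an arrangement: the dimension of the span of its covectors. -/
noncomputable def rank (A : Arrangement K ℓ) : ℕ :=
  Module.finrank K (Submodule.span K (A.hyps : Set (Fin ℓ → K)))

/-- `A` is reducible: after a linear change of coordinates it is a product of two
arrangements in complementary (nonzero) subspaces.  In terms of covectors: the
covectors split between two complementary nonzero subspaces of the dual space. -/
def Reducible (A : Arrangement K ℓ) : Prop :=
  ∃ W₁ W₂ : Submodule K (Fin ℓ → K), W₁ ≠ ⊥ ∧ W₂ ≠ ⊥ ∧ W₁ ⊓ W₂ = ⊥ ∧ W₁ ⊔ W₂ = ⊤ ∧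
    ∀ c ∈ A.hyps, c ∈ W₁ ∨ c ∈ W₂

/-- The hyperplanes of the localization at a flat; the flat of codimension `r` is
encoded by the `r`-dimensional subspace `U` of the dual space spanned by the
covectors of the hyperplanes containing it. -/
noncomputable def locHyps (A : Arrangement K ℓ) (U : Submodule K (Fin ℓ → K)) :
    Finset (Fin ℓ → K) :=
  A.hyps.filter (· ∈ U)

/-- `U` encodes a flat of `A` of codimension `r` (an element of `L_r(A)`). -/
def IsFlatOfRank (A : Arrangement K ℓ) (U : Submodule K (Fin ℓ → K)) (r : ℕ) : Prop :=
  Module.finrank K U = r ∧ Submodule.span K (locHyps A U : Set (Fin ℓ → K)) = U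

/-- The localization `A_X` of `A` at the flat encoded by `U`. -/
noncomputable def localize (A : Arrangement K ℓ) (U : Submodule K (Fin ℓ → K)) :
    Arrangement K ℓ where
  hyps := locHyps A U
  ne_zero := fun c hc => A.ne_zero c (Finset.mem_filter.mp hc).1
  nonparallel := fun c hc c' hc' =>
    A.nonparallel c (Finset.mem_filter.mp hc).1 c' (Finset.mem_filter.mp hc').1

/-- `H₀` (given by covector `c₀`) is a heavy hyperplane of `(A,m)`. -/
def IsHeavy (A : Arrangement K ℓ) (m : (Fin ℓ → K) → ℕ) (c₀ : Fin ℓ → K) : Prop :=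
  c₀ ∈ A.hyps ∧ (∑ c ∈ A.hyps.erase c₀, m c) ≤ m c₀

/-- `H₀` (given by covector `c₀`) is a locally heavy hyperplane of `(A,m)`. -/
def IsLocallyHeavy (A : Arrangement K ℓ) (m : (Fin ℓ → K) → ℕ) (c₀ : Fin ℓ → K) : Prop :=
  c₀ ∈ A.hyps ∧ ∀ U : Submodule K (Fin ℓ → K), IsFlatOfRank A U 2 → c₀ ∈ U →
    3 ≤ (locHyps A U).card → (∑ c ∈ (locHyps A U).erase c₀, m c) ≤ m c₀

/-- `b` is the second Betti number of the rank-2 localization of `(A,m)` at `U`: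
the product of the nonzero exponents of this free rank-2 multiarrangement. -/
def IsLocalB2 (A : Arrangement K ℓ) (m : (Fin ℓ → K) → ℕ)
    (U : Submodule K (Fin ℓ → K)) (b : ℕ) : Prop :=
  ∃ d : Fin ℓ → ℕ, IsFreeWithExp (localize A U) m d ∧
    b = ∏ i ∈ Finset.univ.filter (fun i => d i ≠ 0), d i

/-- `b` is the second Betti number `b₂(A,m)` of the multiarrangement `(A,m)`. -/
def IsB2 (A : Arrangement K ℓ) (m : (Fin ℓ → K) → ℕ) (b : ℕ) : Prop :=
  ∃ bloc : Submodule K (Fin ℓ → K) → ℕ,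
    (∀ U, IsFlatOfRank A U 2 → IsLocalB2 A m U (bloc U)) ∧
    b = ∑ᶠ U ∈ {U : Submodule K (Fin ℓ → K) | IsFlatOfRank A U 2}, bloc U

/-- The second Betti number of a simple arrangement:
`b₂(A) = Σ_{X ∈ L₂(A)} (|A_X| - 1)`. -/
noncomputable def b2Simple (A : Arrangement K ℓ) : ℕ :=
  ∑ᶠ U ∈ {U : Submodule K (Fin ℓ → K) | IsFlatOfRank A U 2}, ((locHyps A U).card - 1)

/-- The Euler–Ziegler multiplicity of the restricted hyperplane `H₀ ∩ ker(c)` of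
`A^{H₀}`: `m^{H₀}(X) = |m_X| - m(H₀)`. -/
noncomputable def EZmult (A : Arrangement K ℓ) (m : (Fin ℓ → K) → ℕ)
    (c₀ c : Fin ℓ → K) : ℕ :=
  (∑ c' ∈ A.hyps.filter (· ∈ Submodule.span K ({c₀, c} : Set (Fin ℓ → K))), m c') - m c₀

/-- Two covectors are parallel (define the same hyperplane). -/
def Parallel {n : ℕ} (b b' : Fin n → K) : Prop := ∃ t : K, t ≠ 0 ∧ b' = t • b

/-- The covector on `K^n` obtained by restricting the covector `c` on `K^{n+1}` to the
hyperplane `ker c₀`, transported by the linear isomorphism `e : ker c₀ ≃ K^n`. -/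
noncomputable def resCov {n : ℕ} (c₀ : Fin (n+1) → K)
    (e : ↥(LinearMap.ker (toFunc c₀)) ≃ₗ[K] (Fin n → K)) (c : Fin (n+1) → K) :
    Fin n → K :=
  fun j => toFunc c ((e.symm (Pi.single j 1) : ↥(LinearMap.ker (toFunc c₀))) : Fin (n+1) → K)

/-- `(B, mB)` is (a model, in coordinates, of) the Euler–Ziegler restriction
`(A^{H₀}, m^{H₀})` of `(A,m)` to the hyperplane `H₀ = ker c₀ ∈ A`. -/
def IsEZRes {n : ℕ} (A : Arrangement K (n+1)) (m : (Fin (n+1) → K) → ℕ)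
    (c₀ : Fin (n+1) → K) (B : Arrangement K n) (mB : (Fin n → K) → ℕ) : Prop :=
  c₀ ∈ A.hyps ∧
  ∃ e : ↥(LinearMap.ker (toFunc c₀)) ≃ₗ[K] (Fin n → K),
    (∀ c ∈ A.hyps.erase c₀, ∃ b ∈ B.hyps,
        Parallel b (resCov c₀ e c) ∧ mB b = EZmult A m c₀ c) ∧
    (∀ b ∈ B.hyps, ∃ c ∈ A.hyps.erase c₀, Parallel b (resCov c₀ e c))

/-- A combinatorial equivalence between two arrangements: a bijection between the
hyperplanes inducing an isomorphism of intersection lattices (it preserves the rank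
of every subset of hyperplanes). -/
def CombEquiv (A A' : Arrangement K ℓ) : Prop :=
  ∃ φ : (Fin ℓ → K) → (Fin ℓ → K), Set.BijOn φ ↑A.hyps ↑A'.hyps ∧
    ∀ T : Finset (Fin ℓ → K), T ⊆ A.hyps →
      Module.finrank K (Submodule.span K (T : Set (Fin ℓ → K))) =
      Module.finrank K (Submodule.span K ((T.image φ) : Set (Fin ℓ → K)))

section LinearForms

lemma linForm_add (c c' : Fin ℓ → K) : linForm (c + c') = linForm c + linForm c' := by
  simp [linForm, add_mul, Finset.sum_add_distrib]

lemma linForm_smul (t : K) (c : Fin ℓ → K) : linForm (t • c) = C t * linForm c := by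
  simp [linForm, Finset.mul_sum, mul_assoc]

lemma linForm_sub (c c' : Fin ℓ → K) : linForm (c - c') = linForm c - linForm c' := by
  simp [linForm, sub_mul, Finset.sum_sub_distrib]

lemma aeval_linForm {R : Type*} [CommRing R] [Algebra K R] (f : Fin ℓ → R) (c : Fin ℓ → K) :
    aeval f (linForm c) = ∑ j, algebraMap K R (c j) * f j := by
  simp [linForm]

lemma constantCoeff_linForm (c : Fin ℓ → K) : constantCoeff (linForm c) = 0 := by
  simp [linForm]

lemma linForm_ne_zero {c : Fin ℓ → K} (hc : c ≠ 0) : linForm c ≠ 0 := by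
  intro h
  apply hc
  funext i
  have := congrArg (aeval (Pi.single i (1 : K))) h
  simpa [aeval_linForm, Pi.single_apply] using this

lemma derivation_linForm (θ : Der K ℓ) (c : Fin ℓ → K) :
    θ (linForm c) = ∑ j, C (c j) * θ (X j) := by
  simp [linForm, ← smul_eq_C_mul]

/-- A covector outside a subspace is separated from it by a vector. -/
lemma exists_dotProduct_eq_one {W : Submodule K (Fin ℓ → K)} {c : Fin ℓ → K} (hc : c ∉ W) :
    ∃ v : Fin ℓ → K, (∀ w ∈ W, w ⬝ᵥ v = 0) ∧ c ⬝ᵥ v = 1 := by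
  obtain ⟨f, hf, hW⟩ := Submodule.exists_le_ker_of_notMem hc
  have key : ∀ w, w ⬝ᵥ (fun i => (f c)⁻¹ * f (fun j => if i = j then 1 else 0)) =
      (f c)⁻¹ * f w := by
    intro w
    rw [LinearMap.pi_apply_eq_sum_univ f w, dotProduct, Finset.mul_sum]
    exact Finset.sum_congr rfl fun i _ => by rw [smul_eq_mul]; ring
  refine ⟨_, fun w hw => ?_, (key c).trans (inv_mul_cancel₀ hf)⟩
  rw [key, show f w = 0 from hW hw, mul_zero]

lemma exists_dotProduct_eq_one_of_ne_zero {c : Fin ℓ → K} (hc : c ≠ 0) :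
    ∃ v : Fin ℓ → K, c ⬝ᵥ v = 1 := by
  obtain ⟨v, -, hv⟩ := exists_dotProduct_eq_one (W := ⊥) (c := c) (by simpa using hc)
  exact ⟨v, hv⟩

/-- The endomorphism of `S` induced by the projection of `K^ℓ` onto `ker c` along `v`. It realizes
reduction modulo `linForm c` when `c ⬝ᵥ v = 1`. -/
noncomputable def restrictAlong (c v : Fin ℓ → K) : S K ℓ →ₐ[K] S K ℓ :=
  aeval fun j => X j - C (v j) * linForm c

lemma restrictAlong_linForm (c v c' : Fin ℓ → K) :
    restrictAlong c v (linForm c') = linForm (c' - (c' ⬝ᵥ v) • c) := by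
  rw [restrictAlong, aeval_linForm, linForm_sub, linForm_smul]
  simp only [algebraMap_eq, mul_sub, Finset.sum_sub_distrib, dotProduct, map_sum, map_mul,
    Finset.sum_mul, mul_assoc]
  rfl

lemma restrictAlong_self {c v : Fin ℓ → K} (hv : c ⬝ᵥ v = 1) :
    restrictAlong c v (linForm c) = 0 := by
  rw [restrictAlong_linForm, hv]
  simp [linForm]

lemma constantCoeff_restrictAlong (c v : Fin ℓ → K) (f : S K ℓ) :
    constantCoeff (restrictAlong c v f) = constantCoeff f := by
  induction f using MvPolynomial.induction_on with
  | C a => simp [restrictAlong]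
  | add p q hp hq => simp [hp, hq]
  | mul_X p i _ => simp [restrictAlong, constantCoeff_linForm]

lemma linForm_dvd_sub_restrictAlong (c v : Fin ℓ → K) (f : S K ℓ) :
    linForm c ∣ f - restrictAlong c v f := by
  induction f using MvPolynomial.induction_on with
  | C a => simp [restrictAlong]
  | add p q hp hq => simpa [add_sub_add_comm] using dvd_add hp hq
  | mul_X p i hp =>
    have : p * X i - restrictAlong c v (p * X i) =
        (p - restrictAlong c v p) * X i + linForm c * (C (v i) * restrictAlong c v p) := by
      simp only [map_mul]
      simp only [restrictAlong, aeval_X]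
      ring
    rw [this]
    exact dvd_add (hp.mul_right _) (dvd_mul_right _ _)

lemma linForm_dvd_iff {c v : Fin ℓ → K} (hv : c ⬝ᵥ v = 1) (f : S K ℓ) :
    linForm c ∣ f ↔ restrictAlong c v f = 0 := by
  constructor
  · rintro ⟨g, rfl⟩
    rw [map_mul, restrictAlong_self hv, zero_mul]
  · intro h
    simpa [h] using linForm_dvd_sub_restrictAlong c v f

lemma prime_linForm {c : Fin ℓ → K} (hc : c ≠ 0) : Prime (linForm c) := by
  obtain ⟨v, hv⟩ := exists_dotProduct_eq_one_of_ne_zero hc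
  refine ⟨linForm_ne_zero hc, fun h => ?_, fun a b h => ?_⟩
  · have := h.map constantCoeff
    simp [constantCoeff_linForm] at this
  · rw [linForm_dvd_iff hv] at h ⊢
    rw [linForm_dvd_iff hv]
    simpa using h

lemma exists_smul_of_linForm_dvd {c c' : Fin ℓ → K} (hc : c ≠ 0)
    (h : linForm c ∣ linForm c') : ∃ t : K, c' = t • c := by
  obtain ⟨v, hv⟩ := exists_dotProduct_eq_one_of_ne_zero hc
  refine ⟨c' ⬝ᵥ v, ?_⟩
  rw [linForm_dvd_iff hv, restrictAlong_linForm] at h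
  by_contra hne
  exact linForm_ne_zero (sub_ne_zero.mpr hne) h

lemma Arrangement.prod_linForm_pow_dvd (A : Arrangement K ℓ) (m : (Fin ℓ → K) → ℕ)
    {s : Finset (Fin ℓ → K)} (hs : s ⊆ A.hyps) {f : S K ℓ}
    (h : ∀ c ∈ s, linForm c ^ m c ∣ f) : ∏ c ∈ s, linForm c ^ m c ∣ f := by
  refine Finset.prod_dvd_of_isRelPrime (fun c hc c' hc' hne => ?_) h
  refine IsRelPrime.pow ?_
  rw [(prime_linForm (A.ne_zero c (hs hc))).irreducible.isRelPrime_iff_not_dvd]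
  intro hd
  obtain ⟨t, ht⟩ := exists_smul_of_linForm_dvd (A.ne_zero c (hs hc)) hd
  exact A.nonparallel c (hs hc) c' (hs hc') hne t ht

/-- A product of prime powers divides `f` as soon as, for each prime, its total exponent (up to
associates) does. -/
lemma prod_prime_pow_dvd {ι : Type*} (s : Finset ι) (p : ι → S K ℓ) (hp : ∀ i ∈ s, Prime (p i))
    (m : ι → ℕ) {f : S K ℓ}
    (h : ∀ i ∈ s, p i ^ (∑ j ∈ s.filter (fun j => Associated (p j) (p i)), m j) ∣ f) :
    ∏ i ∈ s, p i ^ m i ∣ f := by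
  have hmaps : ∀ i ∈ s, Associates.mk (p i) ∈ s.image fun i => Associates.mk (p i) :=
    fun i hi => Finset.mem_image_of_mem _ hi
  rw [← Finset.prod_fiberwise_of_maps_to hmaps]
  refine Finset.prod_dvd_of_isRelPrime (fun a _ b _ hab => ?_) fun a ha => ?_
  · refine IsRelPrime.prod_left fun i hi => IsRelPrime.prod_right fun j hj => IsRelPrime.pow ?_
    rw [Finset.mem_filter] at hi hj
    rw [(hp i hi.1).irreducible.isRelPrime_iff_not_dvd]
    intro hd
    apply hab
    rw [← hi.2, ← hj.2, Associates.mk_eq_mk_iff_associated]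
    exact (hp i hi.1).associated_of_dvd (hp j hj.1) hd
  · obtain ⟨i, hi, rfl⟩ := Finset.mem_image.mp ha
    refine Dvd.dvd.trans ?_ (h i hi)
    simp only [Associates.mk_eq_mk_iff_associated]
    rw [← Finset.prod_pow_eq_pow_sum]
    refine Finset.prod_dvd_prod_of_dvd _ _ fun j hj => pow_dvd_pow_of_dvd ?_ _
    exact (Finset.mem_filter.mp hj).2.dvd

end LinearForms

section Saito

lemma sum_smul_derivation_apply {ι : Type*} (s : Finset ι) (f : ι → S K ℓ) (θ : ι → Der K ℓ)
    (g : S K ℓ) : (∑ i ∈ s, f i • θ i) g = ∑ i ∈ s, f i * θ i g := by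
  have := congrFun (map_sum Derivation.coeFnAddMonoidHom (fun i => f i • θ i) s) g
  rwa [Derivation.coeFnAddMonoidHom_apply, Finset.sum_apply] at this

/-- The matrix of values of a family of derivations on the coordinates. -/
noncomputable def derMatrix (θ : Fin ℓ → Der K ℓ) : Matrix (Fin ℓ) (Fin ℓ) (S K ℓ) :=
  Matrix.of fun i j => θ i (X j)

lemma derMatrix_mulVec (θ : Fin ℓ → Der K ℓ) (c : Fin ℓ → K) (i : Fin ℓ) :
    (derMatrix θ).mulVec (fun j => C (c j)) i = θ i (linForm c) := by
  rw [derivation_linForm]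
  simp only [Matrix.mulVec, dotProduct, derMatrix, Matrix.of_apply]
  exact Finset.sum_congr rfl fun j _ => mul_comm _ _

lemma dvd_det_of_dvd_mulVec (M : Matrix (Fin ℓ) (Fin ℓ) (S K ℓ)) {w : Fin ℓ → K} (hw : w ≠ 0)
    {d : S K ℓ} (h : ∀ i, d ∣ M.mulVec (fun j => C (w j)) i) : d ∣ M.det := by
  obtain ⟨j, hj⟩ := Function.ne_iff.mp hw
  have key := congrFun (Matrix.mulVec_mulVec (fun j => C (w j)) M.adjugate M) j
  rw [Matrix.adjugate_mul, Matrix.smul_mulVec, Matrix.one_mulVec, Pi.smul_apply,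
    smul_eq_mul] at key
  have hu : IsUnit (C (w j) : S K ℓ) := (IsUnit.mk0 _ hj).map C
  rw [← hu.dvd_mul_right, ← key]
  change d ∣ ∑ i, M.adjugate j i * M.mulVec (fun j => C (w j)) i
  exact Finset.dvd_sum fun i _ => (h i).mul_left _

/-- The defining polynomial `∏ α_H ^ m(H)` of the multiarrangement. -/
noncomputable def defPoly (A : Arrangement K ℓ) (m : (Fin ℓ → K) → ℕ) : S K ℓ :=
  ∏ c ∈ A.hyps, linForm c ^ m c

lemma defPoly_dvd_det (A : Arrangement K ℓ) (m : (Fin ℓ → K) → ℕ) {θ : Fin ℓ → Der K ℓ}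
    (hθ : ∀ i, IsLogDer A m (θ i)) : defPoly A m ∣ (derMatrix θ).det := by
  refine A.prod_linForm_pow_dvd m subset_rfl fun c hc => ?_
  refine dvd_det_of_dvd_mulVec _ (A.ne_zero c hc) fun i => ?_
  rw [derMatrix_mulVec]
  exact hθ i c hc

lemma linForm_pow_mul_prod_erase (A : Arrangement K ℓ) (m : (Fin ℓ → K) → ℕ) {c : Fin ℓ → K}
    (hc : c ∈ A.hyps) :
    linForm c ^ m c * ∏ c' ∈ A.hyps.erase c, linForm c' ^ m c' = defPoly A m :=
  Finset.mul_prod_erase _ (fun c => linForm c ^ m c) hc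

/-- The determinant of a basis divides the determinant of any family of logarithmic derivations. -/
lemma IsDerBasis.det_dvd_det {A : Arrangement K ℓ} {m : (Fin ℓ → K) → ℕ} {θ : Fin ℓ → Der K ℓ}
    (hθ : IsDerBasis A m θ) {η : Fin ℓ → Der K ℓ} (hη : ∀ i, IsLogDer A m (η i)) :
    (derMatrix θ).det ∣ (derMatrix η).det := by
  choose F hF using fun i => (hθ.2 (η i) (hη i)).exists
  have : derMatrix η = Matrix.of F * derMatrix θ := by
    ext1 i j
    rw [Matrix.mul_apply]
    simp only [derMatrix, Matrix.of_apply]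
    conv_lhs => rw [hF i]
    rw [sum_smul_derivation_apply]
  rw [this, Matrix.det_mul]
  exact dvd_mul_left _ _

lemma IsDerBasis.det_dvd_pow {A : Arrangement K ℓ} {m : (Fin ℓ → K) → ℕ}
    {θ : Fin ℓ → Der K ℓ} (hθ : IsDerBasis A m θ) {c : Fin ℓ → K} (hc : c ∈ A.hyps) :
    (derMatrix θ).det ∣
      (∏ c' ∈ A.hyps.erase c, linForm c' ^ m c') ^ ℓ * linForm c ^ m c := by
  obtain ⟨v, hv⟩ := exists_dotProduct_eq_one_of_ne_zero (A.ne_zero c hc)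
  set q := ∏ c' ∈ A.hyps.erase c, linForm c' ^ m c' with hq
  let η : Fin ℓ → Der K ℓ := fun j => mkDerivation K fun k =>
    q * ((if j = k then 1 else 0) + C (c j) * (linForm c ^ m c - 1) * C (v k))
  have hval : ∀ j d, η j (linForm d) =
      q * (C (d j) + C (c j) * (linForm c ^ m c - 1) * C (d ⬝ᵥ v)) := by
    intro j d
    rw [derivation_linForm]
    simp only [η, mkDerivation_X, dotProduct, map_sum, map_mul]
    simp only [mul_add, Finset.sum_add_distrib, Finset.mul_sum]
    congr 1
    · simp [mul_comm]
    · exact Finset.sum_congr rfl fun k _ => by ring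
  have hlog : ∀ j, IsLogDer A m (η j) := by
    intro j d hd
    rw [hval]
    by_cases hdc : d = c
    · subst hdc
      rw [hv, map_one]
      exact ⟨q * C (d j), by ring⟩
    · exact (Finset.dvd_prod_of_mem (fun c => linForm c ^ m c)
        (Finset.mem_erase.mpr ⟨hdc, hd⟩)).mul_right _
  have hdet : (derMatrix η).det = q ^ ℓ * linForm c ^ m c := by
    let a : Fin ℓ → S K ℓ := fun j => C (c j)
    let b : Fin ℓ → S K ℓ := fun k => (linForm c ^ m c - 1) * C (v k)
    have : derMatrix η = q • (1 + Matrix.replicateCol Unit a * Matrix.replicateRow Unit b) := by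
      ext1 j k
      simp [derMatrix, η, a, b, mkDerivation_X, Matrix.one_apply, Matrix.mul_apply, mul_assoc]
    rw [this, Matrix.det_smul, Matrix.det_one_add_replicateCol_mul_replicateRow, Fintype.card_fin]
    congr 1
    have : b ⬝ᵥ a = (linForm c ^ m c - 1) * C (c ⬝ᵥ v) := by
      simp only [a, b, dotProduct, map_sum, map_mul, Finset.mul_sum]
      exact Finset.sum_congr rfl fun k _ => by ring
    rw [this, hv]
    simp
  rw [← hdet]
  exact hθ.det_dvd_det hlog

/-- Saito's criterion, necessity: the determinant of a basis is the defining polynomial up to a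
unit. -/
lemma IsDerBasis.exists_det_eq {A : Arrangement K ℓ} {m : (Fin ℓ → K) → ℕ}
    {θ : Fin ℓ → Der K ℓ} (hθ : IsDerBasis A m θ) (hA : A.hyps.Nonempty) :
    ∃ s : S K ℓ, IsUnit s ∧ (derMatrix θ).det = defPoly A m * s := by
  obtain ⟨s, hs⟩ := defPoly_dvd_det A m hθ.1
  refine ⟨s, ?_, hs⟩
  have hdvd : ∀ c ∈ A.hyps, s ∣ (∏ c' ∈ A.hyps.erase c, linForm c' ^ m c') ^ ℓ := by
    intro c hc
    have h := hθ.det_dvd_pow hc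
    rw [hs, ← linForm_pow_mul_prod_erase A m hc, mul_assoc, mul_comm (_ ^ ℓ)] at h
    exact (dvd_mul_left _ _).trans
      ((mul_dvd_mul_iff_left (pow_ne_zero _ (linForm_ne_zero (A.ne_zero c hc)))).mp h)
  obtain ⟨c, hc⟩ := hA
  have hs0 : s ≠ 0 := by
    rintro rfl
    have := zero_dvd_iff.mp (hdvd c hc)
    exact pow_ne_zero _ (Finset.prod_ne_zero_iff.mpr fun c' hc' => pow_ne_zero _
      (linForm_ne_zero (A.ne_zero c' (Finset.mem_of_mem_erase hc')))) this
  by_contra hu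
  obtain ⟨p, hp, hps⟩ := WfDvdMonoid.exists_irreducible_factor hu hs0
  have hex : ∀ c ∈ A.hyps, ∃ c' ∈ A.hyps.erase c, p ∣ linForm c' := by
    intro c hc
    have h := hp.prime.dvd_of_dvd_pow (hps.trans (hdvd c hc))
    obtain ⟨c', hc', h'⟩ := (hp.prime.dvd_finsetProd_iff _).mp h
    exact ⟨c', hc', hp.prime.dvd_of_dvd_pow h'⟩
  obtain ⟨c', hc', h'⟩ := hex c hc
  have hc'A := Finset.mem_of_mem_erase hc'
  obtain ⟨c'', hc'', h''⟩ := hex c' hc'A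
  have hass := hp.prime.associated_of_dvd (prime_linForm (A.ne_zero c' hc'A)) h'
  obtain ⟨t, ht⟩ := exists_smul_of_linForm_dvd (A.ne_zero c' hc'A) (hass.symm.dvd.trans h'')
  obtain ⟨hne, hc''A⟩ := Finset.mem_erase.mp hc''
  exact A.nonparallel c' hc'A c'' hc''A hne.symm t ht

end Saito

section Restriction

lemma aeval_scale_linForm (v u c : Fin ℓ → K) (a b : S K ℓ) :
    aeval (fun j => Polynomial.C (X j) + (Polynomial.X - 1) *
      Polynomial.C (C (v j) * a + C (u j) * b)) (linForm c) =
    Polynomial.C (linForm c) + (Polynomial.X - 1) *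
      Polynomial.C (C (c ⬝ᵥ v) * a + C (c ⬝ᵥ u) * b) := by
  have hterm : ∀ j, algebraMap K (Polynomial (S K ℓ)) (c j) * (Polynomial.C (X j) +
      (Polynomial.X - 1) * Polynomial.C (C (v j) * a + C (u j) * b)) =
      Polynomial.C (C (c j) * X j) + (Polynomial.X - 1) *
        Polynomial.C (C (c j * v j) * a + C (c j * u j) * b) := by
    intro j
    rw [IsScalarTower.algebraMap_apply K (S K ℓ), algebraMap_eq, Polynomial.algebraMap_eq]
    simp only [map_add, map_mul]
    ring
  rw [aeval_linForm, Finset.sum_congr rfl fun j _ => hterm j, Finset.sum_add_distrib,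
    ← Finset.mul_sum, ← map_sum, ← map_sum, Finset.sum_add_distrib, ← Finset.sum_mul,
    ← Finset.sum_mul, ← map_sum, ← map_sum]
  rfl

/-- Let `c ∈ T` be forms in the plane spanned by `w` and `h`, none of them a multiple of `h`. If `g`
is congruent to `0` modulo `c ^ m c` up to a multiple of a large power of `h`, then the
restriction of `g` to `h = 0` is divisible by `w ^ ∑ m c`. -/
lemma linForm_pow_dvd_restrictAlong (A : Arrangement K ℓ) (m : (Fin ℓ → K) → ℕ)
    {h w v : Fin ℓ → K} (hv : h ⬝ᵥ v = 1) (hwv : w ⬝ᵥ v = 0) (hw0 : w ≠ 0)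
    {T : Finset (Fin ℓ → K)} (hTA : T ⊆ A.hyps) {k : ℕ} (hk : ∑ c ∈ T, m c ≤ k) {g f : S K ℓ}
    (hT : ∀ c ∈ T, ∃ t s : K, t ≠ 0 ∧ c = t • w + s • h ∧
      linForm c ^ m c ∣ C t * g + C s * (linForm h ^ k * f)) :
    linForm w ^ (∑ c ∈ T, m c) ∣ restrictAlong h v g := by
  have hwh : w ∉ Submodule.span K {h} := by
    intro hmem
    obtain ⟨s, rfl⟩ := Submodule.mem_span_singleton.mp hmem
    rw [smul_dotProduct, hv, smul_eq_mul, mul_one] at hwv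
    exact hw0 (by rw [hwv, zero_smul])
  obtain ⟨u, hu, hwu⟩ := exists_dotProduct_eq_one hwh
  have hhu : h ⬝ᵥ u = 0 := hu h (Submodule.mem_span_singleton_self h)
  set n := ∑ c ∈ T, m c with hn
  -- `φ` scales the plane spanned by `h` and `w` by the new variable
  let φ : S K ℓ →ₐ[K] Polynomial (S K ℓ) := aeval fun j =>
    Polynomial.C (X j) + (Polynomial.X - 1) *
      Polynomial.C (C (v j) * linForm h + C (u j) * linForm w)
  have hφlin : ∀ c, φ (linForm c) = Polynomial.C (linForm c) + (Polynomial.X - 1) *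
      Polynomial.C (C (c ⬝ᵥ v) * linForm h + C (c ⬝ᵥ u) * linForm w) := by
    intro c
    exact aeval_scale_linForm v u c _ _
  have hφC : ∀ a : K, φ (C a) = Polynomial.C (C a) := by
    intro a
    rw [← algebraMap_eq, AlgHom.commutes, IsScalarTower.algebraMap_apply K (S K ℓ)]
    rfl
  have hφh : φ (linForm h) = Polynomial.X * Polynomial.C (linForm h) := by
    rw [hφlin, hv, hhu]
    simp only [map_one, map_zero, one_mul, zero_mul, add_zero]
    ring
  have hlow : ∀ d < n, ∏ c ∈ T, linForm c ^ m c ∣ (φ g).coeff d := by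
    intro d hd
    refine A.prod_linForm_pow_dvd m hTA fun c hc => ?_
    obtain ⟨t, s, ht, hcts, hdvd⟩ := hT c hc
    have hcv : c ⬝ᵥ v = s := by simp [hcts, hwv, hv]
    have hcu : c ⬝ᵥ u = t := by simp [hcts, hwu, hhu]
    have hφc : φ (linForm c) = Polynomial.X * Polynomial.C (linForm c) := by
      have hc' : linForm c = C s * linForm h + C t * linForm w := by
        rw [hcts, linForm_add, linForm_smul, linForm_smul, add_comm]
      rw [hφlin, hcv, hcu, ← hc']
      ring
    have h1 : Polynomial.C (linForm c ^ m c) ∣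
        Polynomial.C (C t) * φ g + Polynomial.X ^ k *
          (Polynomial.C (C s * linForm h ^ k) * φ f) := by
      have h2 := map_dvd φ hdvd
      simp only [map_add, map_mul, map_pow, hφC, hφc, hφh, mul_pow] at h2
      refine (Dvd.intro_left _ (by rw [map_pow])).trans (h2.trans (dvd_of_eq ?_))
      simp only [map_mul, map_pow]
      ring
    have h3 := (Polynomial.C_dvd_iff_dvd_coeff _ _).mp h1 d
    rw [Polynomial.coeff_add, Polynomial.coeff_C_mul, Polynomial.coeff_X_pow_mul',
      if_neg (by omega), add_zero] at h3
    exact ((IsUnit.mk0 t ht).map C).dvd_mul_left.mp h3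
  let σ : S K ℓ →ₐ[K] Polynomial (S K ℓ) := aeval fun j =>
    Polynomial.C (X j - C (v j) * linForm h - C (u j) * linForm w) +
      Polynomial.C (C (u j)) * Polynomial.X
  have hρw : restrictAlong h v (linForm w) = linForm w := by
    rw [restrictAlong_linForm, hwv, zero_smul, sub_zero]
  have hσC : ∀ a : K, σ (C a) = Polynomial.C (C a) := by
    intro a
    rw [← algebraMap_eq, AlgHom.commutes, IsScalarTower.algebraMap_apply K (S K ℓ)]
    rfl
  have hσφ : ∀ g, (φ g).map (restrictAlong h v : S K ℓ →+* S K ℓ) =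
      (σ g).comp (Polynomial.C (linForm w) * Polynomial.X) := by
    intro g
    induction g using MvPolynomial.induction_on with
    | C a =>
      rw [hφC, hσC, Polynomial.map_C, Polynomial.C_comp]
      simp [restrictAlong]
    | add p q hp hq => simp only [map_add, Polynomial.map_add, Polynomial.add_comp, hp, hq]
    | mul_X p i hp =>
      rw [map_mul, map_mul, Polynomial.map_mul, Polynomial.mul_comp, hp]
      congr 1
      have hX : restrictAlong h v (X i) = X i - C (v i) * linForm h := by simp [restrictAlong]
      have hC : ∀ a, restrictAlong h v (C a) = C a := fun a => by simp [restrictAlong]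
      simp only [φ, σ, aeval_X, Polynomial.map_add, Polynomial.map_mul, Polynomial.map_sub,
        Polynomial.map_X, Polynomial.map_one, Polynomial.map_C, Polynomial.add_comp,
        Polynomial.sub_comp, Polynomial.mul_comp, Polynomial.C_comp, Polynomial.X_comp,
        RingHom.coe_coe, map_add,
        map_mul, hX, hC, hρw, restrictAlong_self hv, map_sub, mul_zero, zero_add, map_zero]
      ring
  have heval : ∀ g, (φ g).eval 1 = g := by
    intro g
    induction g using MvPolynomial.induction_on with
    | C a => rw [hφC, Polynomial.eval_C]
    | add p q hp hq => rw [map_add, Polynomial.eval_add, hp, hq]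
    | mul_X p i hp =>
      rw [map_mul, Polynomial.eval_mul, hp]
      simp [φ]
  have hprod : linForm w ^ n ∣ restrictAlong h v (∏ c ∈ T, linForm c ^ m c) := by
    rw [map_prod, hn, ← Finset.prod_pow_eq_pow_sum]
    refine Finset.prod_dvd_prod_of_dvd _ _ fun c hc => ?_
    obtain ⟨t, s, -, hcts, -⟩ := hT c hc
    rw [map_pow]
    refine pow_dvd_pow_of_dvd ?_ _
    rw [hcts, linForm_add, linForm_smul, linForm_smul, map_add, map_mul, map_mul, hρw,
      restrictAlong_self hv, mul_zero, add_zero]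
    exact dvd_mul_left _ _
  have hall : Polynomial.C (linForm w ^ n) ∣
      (φ g).map (restrictAlong h v : S K ℓ →+* S K ℓ) := by
    rw [Polynomial.C_dvd_iff_dvd_coeff]
    intro d
    by_cases hd : d < n
    · rw [Polynomial.coeff_map]
      exact hprod.trans (map_dvd (restrictAlong h v) (hlow d hd))
    · rw [hσφ, Polynomial.comp_C_mul_X_coeff]
      exact (pow_dvd_pow _ (not_lt.mp hd)).mul_left _
  have := map_dvd (Polynomial.evalRingHom (1 : S K ℓ)) hall
  rw [Polynomial.coe_evalRingHom, Polynomial.eval_C, Polynomial.eval_one_map, heval] at this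
  exact this

lemma exists_smul_add_smul_of_mem_span {h c d : Fin ℓ → K} (v : Fin ℓ → K)
    (hd : d ∈ Submodule.span K {h, c}) :
    ∃ t s : K, d = t • (c - (c ⬝ᵥ v) • h) + s • h := by
  obtain ⟨a, b, rfl⟩ := Submodule.mem_span_pair.mp hd
  exact ⟨b, a + b * (c ⬝ᵥ v), by module⟩

lemma isFlatOfRank_span_pair (A : Arrangement K ℓ) {h c : Fin ℓ → K} (hh : h ∈ A.hyps)
    (hc : c ∈ A.hyps) (hne : h ≠ c) : IsFlatOfRank A (Submodule.span K {h, c}) 2 := by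
  constructor
  · have hli : LinearIndependent K ![h, c] := by
      rw [LinearIndependent.pair_iff' (A.ne_zero h hh)]
      exact fun a ha => A.nonparallel h hh c hc hne a ha.symm
    have := finrank_span_eq_card hli
    rwa [Matrix.range_cons_cons_empty, Fintype.card_fin] at this
  · refine le_antisymm (Submodule.span_le.mpr fun d hd => (Finset.mem_filter.mp hd).2) ?_
    refine Submodule.span_mono ?_
    rintro d (rfl | rfl)
    · exact Finset.mem_coe.mpr (Finset.mem_filter.mpr ⟨hh, Submodule.subset_span (by simp)⟩)
    · exact Finset.mem_coe.mpr (Finset.mem_filter.mpr ⟨hc, Submodule.subset_span (by simp)⟩)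

/-- The restriction of a logarithmic derivation to a locally heavy hyperplane is logarithmic for
the Euler–Ziegler multiplicity. -/
lemma IsLogDer.linForm_pow_dvd_restrictAlong {A : Arrangement K ℓ} {m : (Fin ℓ → K) → ℕ}
    {h v : Fin ℓ → K} (hv : h ⬝ᵥ v = 1) (hh : IsLocallyHeavy A m h) (hm : 0 < m h)
    {η : Der K ℓ} (hη : IsLogDer A m η) {c : Fin ℓ → K} (hc : c ∈ A.hyps) (hne : c ≠ h) :
    linForm (c - (c ⬝ᵥ v) • h) ^
        (∑ d ∈ (locHyps A (Submodule.span K {h, c})).erase h, m d) ∣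
      restrictAlong h v (η (linForm (c - (c ⬝ᵥ v) • h))) := by
  set U := Submodule.span K {h, c} with hU
  set w := c - (c ⬝ᵥ v) • h with hw
  have hhU : h ∈ U := Submodule.subset_span (by simp)
  have hcU : c ∈ U := Submodule.subset_span (by simp)
  have hwv : w ⬝ᵥ v = 0 := by simp [hw, hv]
  have hw0 : w ≠ 0 := sub_ne_zero.mpr (A.nonparallel h hh.1 c hc hne.symm _)
  obtain ⟨f, hf⟩ := hη h hh.1
  by_cases hcard : 3 ≤ (locHyps A U).card
  · have hflat : IsFlatOfRank A U 2 := isFlatOfRank_span_pair A hh.1 hc hne.symm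
    refine ArrPaper.linForm_pow_dvd_restrictAlong A m hv hwv hw0
      (fun d hd => (Finset.mem_filter.mp (Finset.mem_of_mem_erase hd)).1)
      (hh.2 U hflat hhU hcard) (f := f) fun d hd => ?_
    obtain ⟨hdh, hd⟩ := Finset.mem_erase.mp hd
    obtain ⟨hdA, hdU⟩ := Finset.mem_filter.mp hd
    obtain ⟨t, s, hdts⟩ := exists_smul_add_smul_of_mem_span v hdU
    rw [← hw] at hdts
    refine ⟨t, s, ?_, hdts, ?_⟩
    · rintro rfl
      exact A.nonparallel h hh.1 d hdA hdh.symm s (by simpa using hdts)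
    · have hlog := hη d hdA
      have : η (linForm d) = C t * η (linForm w) + C s * (linForm h ^ m h * f) := by
        rw [← hf]
        conv_lhs => rw [hdts]
        simp [linForm_add, linForm_smul, ← smul_eq_C_mul]
      rwa [this] at hlog
  · have herase : (locHyps A U).erase h = {c} := by
      have hhm : h ∈ locHyps A U := Finset.mem_filter.mpr ⟨hh.1, hhU⟩
      have hcm : c ∈ (locHyps A U).erase h :=
        Finset.mem_erase.mpr ⟨hne, Finset.mem_filter.mpr ⟨hc, hcU⟩⟩
      refine (Finset.eq_of_subset_of_card_le (Finset.singleton_subset_iff.mpr hcm) ?_).symm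
      rw [Finset.card_erase_of_mem hhm, Finset.card_singleton]
      omega
    rw [herase, Finset.sum_singleton]
    have h1 := map_dvd (restrictAlong h v) (hη c hc)
    rw [map_pow, restrictAlong_linForm, ← hw] at h1
    have h2 : restrictAlong h v (η (linForm w)) = restrictAlong h v (η (linForm c)) := by
      rw [hw, linForm_sub, linForm_smul, map_sub, ← smul_eq_C_mul, Derivation.map_smul, hf,
        map_sub, map_smul, map_mul, map_pow, restrictAlong_self hv, zero_pow hm.ne', zero_mul,
        smul_zero, sub_zero]
    rwa [h2]

end Restriction

section HeavyBasis

lemma prod_restrictAlong_dvd_det {A : Arrangement K ℓ} {m : (Fin ℓ → K) → ℕ}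
    {h v : Fin ℓ → K} (hv : h ⬝ᵥ v = 1) (hh : IsLocallyHeavy A m h) (hm : 0 < m h)
    {θ : Fin ℓ → Der K ℓ} (hθ : ∀ i, IsLogDer A m (θ i)) (i : Fin ℓ) :
    restrictAlong h v (∏ c ∈ A.hyps.erase h, linForm c ^ m c) ∣
      restrictAlong h v ((derMatrix θ).updateRow i fun j => C (v j)).det := by
  simp only [map_prod, map_pow, restrictAlong_linForm]
  have hw0 : ∀ c ∈ A.hyps.erase h, c - (c ⬝ᵥ v) • h ≠ 0 := fun c hc => sub_ne_zero.mpr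
    (A.nonparallel h hh.1 c (Finset.mem_of_mem_erase hc) (Finset.ne_of_mem_erase hc).symm _)
  refine prod_prime_pow_dvd _ (fun c => linForm (c - (c ⬝ᵥ v) • h))
    (fun c hc => prime_linForm (hw0 c hc)) m fun c hc => ?_
  obtain ⟨hch, hcA⟩ := Finset.mem_erase.mp hc
  have hle : ∑ d ∈ (A.hyps.erase h).filter (fun d => Associated (linForm (d - (d ⬝ᵥ v) • h))
      (linForm (c - (c ⬝ᵥ v) • h))), m d ≤
      ∑ d ∈ (locHyps A (Submodule.span K {h, c})).erase h, m d := by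
    refine Finset.sum_le_sum_of_subset fun d hd => ?_
    obtain ⟨hd, hass⟩ := Finset.mem_filter.mp hd
    obtain ⟨hdh, hdA⟩ := Finset.mem_erase.mp hd
    refine Finset.mem_erase.mpr ⟨hdh, Finset.mem_filter.mpr ⟨hdA, ?_⟩⟩
    obtain ⟨t, ht⟩ := exists_smul_of_linForm_dvd (hw0 c hc) hass.symm.dvd
    exact Submodule.mem_span_pair.mpr ⟨d ⬝ᵥ v - t * (c ⬝ᵥ v), t, by
      rw [sub_eq_iff_eq_add] at ht
      conv_rhs => rw [ht]
      module⟩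
  refine (pow_dvd_pow _ hle).trans ?_
  set w := c - (c ⬝ᵥ v) • h with hw
  have hwv : w ⬝ᵥ v = 0 := by simp [hw, hv]
  rw [AlgHom.map_det]
  refine dvd_det_of_dvd_mulVec _ (hw0 c hc) fun a => ?_
  have hmul : ((restrictAlong h v).mapMatrix
      ((derMatrix θ).updateRow i fun j => C (v j))).mulVec (fun j => C (w j)) a =
      restrictAlong h v (((derMatrix θ).updateRow i fun j => C (v j)).mulVec
        (fun j => C (w j)) a) := by
    simp only [Matrix.mulVec, dotProduct, map_sum, map_mul, AlgHom.mapMatrix_apply,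
      Matrix.map_apply]
    exact Finset.sum_congr rfl fun j _ => by simp [restrictAlong]
  rw [← hw, hmul]
  by_cases hai : a = i
  · subst hai
    have : ((derMatrix θ).updateRow a fun j => C (v j)).mulVec (fun j => C (w j)) a =
        C (w ⬝ᵥ v) := by
      simp only [Matrix.mulVec, dotProduct, Matrix.updateRow_self, map_sum, map_mul]
      exact Finset.sum_congr rfl fun j _ => mul_comm _ _
    rw [this, hwv, map_zero, map_zero]
    exact dvd_zero _
  · have : ((derMatrix θ).updateRow i fun j => C (v j)).mulVec (fun j => C (w j)) a =
        (derMatrix θ).mulVec (fun j => C (w j)) a := by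
      simp only [Matrix.mulVec, dotProduct, Matrix.updateRow_ne hai]
    rw [this, derMatrix_mulVec]
    exact (hθ a).linForm_pow_dvd_restrictAlong hv hh hm hcA hch

/-- Restricted to a locally heavy hyperplane `h`, the elements of a basis satisfy a linear relation
whose coefficients do not vanish at the origin when paired with the cofactors of `h ^ m h`. -/
lemma IsDerBasis.exists_relation {A : Arrangement K ℓ} {m : (Fin ℓ → K) → ℕ}
    {h : Fin ℓ → K} (hh : IsLocallyHeavy A m h) (hm : 0 < m h)
    {θ : Fin ℓ → Der K ℓ} (hθ : IsDerBasis A m θ) {f : Fin ℓ → S K ℓ}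
    (hf : ∀ i, θ i (linForm h) = linForm h ^ m h * f i) :
    ∃ v : Fin ℓ → K, ∃ k : Fin ℓ → S K ℓ, h ⬝ᵥ v = 1 ∧
      ∑ i, constantCoeff (k i) * constantCoeff (f i) ≠ 0 ∧
      ∀ c, ∑ i, k i * restrictAlong h v (θ i (linForm c)) = 0 := by
  obtain ⟨v, hv⟩ := exists_dotProduct_eq_one_of_ne_zero (A.ne_zero h hh.1)
  obtain ⟨s, hs, hdet⟩ := hθ.exists_det_eq ⟨h, hh.1⟩
  set q := ∏ c ∈ A.hyps.erase h, linForm c ^ m c with hq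
  let μ : Fin ℓ → S K ℓ := fun i => ((derMatrix θ).updateRow i fun j => C (v j)).det
  choose k hk using fun i => prod_restrictAlong_dvd_det hv hh hm hθ.1 i
  have hμ : ∀ i, restrictAlong h v (μ i) = restrictAlong h v q * k i := hk
  have hq0 : restrictAlong h v q ≠ 0 := by
    simp only [hq, map_prod, map_pow, restrictAlong_linForm]
    exact Finset.prod_ne_zero_iff.mpr fun c hc => pow_ne_zero _ (linForm_ne_zero
      (sub_ne_zero.mpr (A.nonparallel h hh.1 c (Finset.mem_of_mem_erase hc)
        (Finset.ne_of_mem_erase hc).symm _)))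
  have hrel : ∀ c, ∑ i, μ i * θ i (linForm c) = (derMatrix θ).det * C (c ⬝ᵥ v) := by
    intro c
    have hcol : ∀ j, ∑ i, μ i * θ i (X j) = (derMatrix θ).det * C (v j) := by
      intro j
      have h1 := congrFun (Matrix.mulVec_cramer (derMatrix θ).transpose fun j => C (v j)) j
      rw [Matrix.det_transpose, Pi.smul_apply, smul_eq_mul] at h1
      rw [← h1]
      simp only [Matrix.mulVec, dotProduct, Matrix.cramer_transpose_apply]
      exact Finset.sum_congr rfl fun i _ => mul_comm _ _
    simp only [derivation_linForm, dotProduct, map_sum, map_mul, Finset.mul_sum]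
    rw [Finset.sum_comm]
    refine Finset.sum_congr rfl fun j _ => ?_
    calc ∑ i, μ i * (C (c j) * θ i (X j)) = C (c j) * ∑ i, μ i * θ i (X j) := by
          rw [Finset.mul_sum]
          exact Finset.sum_congr rfl fun i _ => by ring
      _ = _ := by rw [hcol]; ring
  refine ⟨v, k, hv, ?_, fun c => ?_⟩
  · have h1 : q * s = ∑ i, μ i * f i := by
      apply mul_left_cancel₀ (pow_ne_zero (m h) (linForm_ne_zero (A.ne_zero h hh.1)))
      have h2 := hrel h
      rw [hv, map_one, mul_one, hdet, ← linForm_pow_mul_prod_erase A m hh.1, mul_assoc] at h2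
      rw [← h2, Finset.mul_sum]
      exact Finset.sum_congr rfl fun i _ => by rw [hf]; ring
    have h3 : restrictAlong h v s = ∑ i, k i * restrictAlong h v (f i) := by
      apply mul_left_cancel₀ hq0
      rw [← map_mul, h1, map_sum, Finset.mul_sum]
      exact Finset.sum_congr rfl fun i _ => by rw [map_mul, hμ]; ring
    have h4 := congrArg constantCoeff h3
    simp only [constantCoeff_restrictAlong, map_sum, map_mul] at h4
    rw [← h4]
    exact (hs.map constantCoeff).ne_zero
  · apply mul_left_cancel₀ hq0
    have h1 := congrArg (restrictAlong h v) (hrel c)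
    rw [hdet, ← linForm_pow_mul_prod_erase A m hh.1, map_mul, map_mul, map_mul, map_pow,
      restrictAlong_self hv, zero_pow hm.ne', zero_mul, zero_mul, zero_mul, map_sum] at h1
    rw [mul_zero, ← h1, Finset.mul_sum]
    exact Finset.sum_congr rfl fun i _ => by rw [map_mul, hμ]; ring

/-- In a free multiarrangement with two locally heavy hyperplanes `h` and `l` there is a
logarithmic derivation killing `h` and acting on `l` as `l ^ m l` up to a local unit. -/
lemma IsDerBasis.exists_logDer {A : Arrangement K ℓ} {m : (Fin ℓ → K) → ℕ}
    {θ : Fin ℓ → Der K ℓ} (hθ : IsDerBasis A m θ) {h l : Fin ℓ → K} (hne : h ≠ l)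
    (hh : IsLocallyHeavy A m h) (hmh : 0 < m h) (hl : IsLocallyHeavy A m l) (hml : 0 < m l) :
    ∃ η : Der K ℓ, ∃ G : S K ℓ, IsLogDer A m η ∧ η (linForm h) = 0 ∧
      η (linForm l) = linForm l ^ m l * G ∧ constantCoeff G ≠ 0 := by
  choose f hf using fun i => hθ.1 i h hh.1
  choose g hg using fun i => hθ.1 i l hl.1
  obtain ⟨v, k, hv, hk, hrel⟩ := hθ.exists_relation hh hmh hf
  obtain ⟨-, k', -, hk', -⟩ := hθ.exists_relation hl hml hg
  have hρl : restrictAlong h v (linForm l) ≠ 0 := by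
    rw [restrictAlong_linForm]
    exact linForm_ne_zero (sub_ne_zero.mpr (A.nonparallel h hh.1 l hl.1 hne _))
  have hkg : ∑ i, constantCoeff (k i) * constantCoeff (g i) = 0 := by
    have h1 : ∑ i, k i * restrictAlong h v (g i) = 0 := by
      apply mul_left_cancel₀ (pow_ne_zero (m l) hρl)
      rw [mul_zero, ← hrel l, Finset.mul_sum]
      exact Finset.sum_congr rfl fun i _ => by rw [hg, map_mul, map_pow]; ring
    have h2 := congrArg constantCoeff h1
    simpa only [constantCoeff_restrictAlong, map_sum, map_mul, map_zero] using h2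
  obtain ⟨i, j, hij⟩ : ∃ i j, constantCoeff (f i * g j - f j * g i) ≠ 0 := by
    by_contra! hall
    apply hk'
    refine Finset.sum_eq_zero fun j _ => ?_
    suffices constantCoeff (g j) = 0 by rw [this, mul_zero]
    refine (mul_eq_zero.mp ?_).resolve_left hk
    calc (∑ i, constantCoeff (k i) * constantCoeff (f i)) * constantCoeff (g j)
        = (∑ i, constantCoeff (k i) * constantCoeff (g i)) * constantCoeff (f j) := by
          rw [Finset.sum_mul, Finset.sum_mul]
          refine Finset.sum_congr rfl fun i _ => ?_
          have := hall i j
          rw [map_sub, map_mul, map_mul, sub_eq_zero] at this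
          rw [mul_assoc, this]
          ring
      _ = 0 := by rw [hkg, zero_mul]
  refine ⟨f i • θ j - f j • θ i, f i * g j - f j * g i, fun c hc => ?_, ?_, ?_, hij⟩
  · exact dvd_sub ((hθ.1 j c hc).mul_left (f i)) ((hθ.1 i c hc).mul_left (f j))
  · simp only [Derivation.sub_apply, Derivation.smul_apply, smul_eq_mul, hf]
    ring
  · simp only [Derivation.sub_apply, Derivation.smul_apply, smul_eq_mul, hg]
    ring

end HeavyBasis

section TwoHeavy

/-- Two locally heavy hyperplanes meet in a flat contained in no further hyperplane. -/
lemma notMem_span_pair_of_locallyHeavy {A : Arrangement K ℓ} {m : (Fin ℓ → K) → ℕ}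
    (hm : ∀ c ∈ A.hyps, 0 < m c) {h l c : Fin ℓ → K} (hne : h ≠ l)
    (hh : IsLocallyHeavy A m h) (hl : IsLocallyHeavy A m l) (hc : c ∈ A.hyps) (hch : c ≠ h)
    (hcl : c ≠ l) : c ∉ Submodule.span K {h, l} := by
  intro hcU
  set U := Submodule.span K {h, l}
  have hhU : h ∈ U := Submodule.subset_span (by simp)
  have hlU : l ∈ U := Submodule.subset_span (by simp)
  have hflat := isFlatOfRank_span_pair A hh.1 hl.1 hne
  have hsub : ({h, l, c} : Finset (Fin ℓ → K)) ⊆ locHyps A U := by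
    intro d hd
    simp only [Finset.mem_insert, Finset.mem_singleton] at hd
    rcases hd with rfl | rfl | rfl
    · exact Finset.mem_filter.mpr ⟨hh.1, hhU⟩
    · exact Finset.mem_filter.mpr ⟨hl.1, hlU⟩
    · exact Finset.mem_filter.mpr ⟨hc, hcU⟩
  have hcard : 3 ≤ (locHyps A U).card := by
    refine le_trans (le_of_eq ?_) (Finset.card_le_card hsub)
    exact (Finset.card_eq_three.mpr ⟨h, l, c, hne, hch.symm, hcl.symm, rfl⟩).symm
  have hsum : ∀ a b, a ≠ b → a ≠ c → b ≠ c → b ∈ locHyps A U →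
      m b + m c ≤ ∑ d ∈ (locHyps A U).erase a, m d := by
    intro a b hab hac hbc hb
    rw [← Finset.sum_pair hbc]
    refine Finset.sum_le_sum_of_subset fun d hd => ?_
    simp only [Finset.mem_insert, Finset.mem_singleton] at hd
    rcases hd with rfl | rfl
    · exact Finset.mem_erase.mpr ⟨hab.symm, hb⟩
    · exact Finset.mem_erase.mpr ⟨hac.symm, Finset.mem_filter.mpr ⟨hc, hcU⟩⟩
  have hhm : h ∈ locHyps A U := hsub (by simp)
  have hlm : l ∈ locHyps A U := hsub (by simp)
  have h1 := (hsum h l hne hch.symm hcl.symm hlm).trans (hh.2 U hflat hhU hcard)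
  have h2 := (hsum l h hne.symm hcl.symm hch.symm hhm).trans (hl.2 U hflat hlU hcard)
  have h3 := hm c hc
  omega

/-- If `η` kills `h`, acts on `l` as `l ^ n` up to a local unit, and preserves the ideals of
`z + a h + b l` and `z + a' h + b' l` with `b ≠ b'`, then `l` is in the span of these forms. -/
lemma mem_span_pair_of_linForm_dvd {h l z : Fin ℓ → K} {η : Der K ℓ} {G : S K ℓ} {n : ℕ}
    (hηh : η (linForm h) = 0) (hηl : η (linForm l) = linForm l ^ n * G)
    (hG : constantCoeff G ≠ 0) {a b a' b' : K}
    (h1 : linForm (z + a • h + b • l) ∣ η (linForm (z + a • h + b • l)))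
    (h2 : linForm (z + a' • h + b' • l) ∣ η (linForm (z + a' • h + b' • l))) (hb : b ≠ b') :
    l ∈ Submodule.span K {z + a • h + b • l, z + a' • h + b' • l} := by
  by_contra hl
  obtain ⟨p, hp, hlp⟩ := exists_dotProduct_eq_one hl
  let ev : S K ℓ →ₐ[K] Polynomial K := aeval fun j => Polynomial.C (p j) * Polynomial.X
  have hev : ∀ c, ev (linForm c) = Polynomial.C (c ⬝ᵥ p) * Polynomial.X := by
    intro c
    simp only [ev, aeval_linForm, Polynomial.algebraMap_eq, dotProduct, map_sum, map_mul,
      Finset.sum_mul, mul_assoc]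
  have hevη : ∀ c ∈ ({z + a • h + b • l, z + a' • h + b' • l} : Set (Fin ℓ → K)),
      linForm c ∣ η (linForm c) → ev (η (linForm c)) = 0 := by
    intro c hc hdvd
    have h3 := map_dvd ev hdvd
    rwa [hev, hp c (Submodule.subset_span hc), map_zero, zero_mul, zero_dvd_iff] at h3
  have hdiff : η (linForm (z + a • h + b • l)) - η (linForm (z + a' • h + b' • l)) =
      C (b - b') * (linForm l ^ n * G) := by
    simp only [linForm_add, linForm_smul, ← smul_eq_C_mul, map_add, Derivation.map_smul, hηh, hηl,
      smul_zero, sub_smul]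
    ring
  have h4 := congrArg ev hdiff
  rw [map_sub, hevη _ (by simp) h1, hevη _ (by simp) h2, sub_zero, map_mul, map_mul, map_pow, hev,
    hlp] at h4
  have hevC : ev (C (b - b')) ≠ 0 := by
    simp only [ev, ← algebraMap_eq, AlgHom.commutes, Polynomial.algebraMap_eq]
    simpa [sub_eq_zero] using hb
  have hevG : ev G ≠ 0 := by
    intro h0
    apply hG
    have hcc : ∀ F, (ev F).eval 0 = constantCoeff F := by
      intro F
      induction F using MvPolynomial.induction_on with
      | C a => simp [ev]
      | add p q hp hq => simp [hp, hq]
      | mul_X p i _ => simp [ev]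
    rw [← hcc, h0, Polynomial.eval_zero]
  have hX : (Polynomial.C (1 : K) * Polynomial.X) ^ n ≠ 0 := by simp
  exact mul_ne_zero hevC (mul_ne_zero hX hevG) h4.symm

lemma forall_eq_or_forall_eq {ι α β : Type*} {a : ι → α} {b : ι → β}
    (hab : ∀ i j, a i = a j ∨ b i = b j) : (∀ i j, a i = a j) ∨ ∀ i j, b i = b j := by
  by_contra! hcon
  obtain ⟨⟨i, j, hij⟩, k, k', hkk⟩ := hcon
  have := hab i j
  have := hab i k
  have := hab i k'
  have := hab j k
  have := hab j k'
  have := hab k k'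
  grind

end TwoHeavy

theorem stmt14 (A : Arrangement K ℓ) (hℓ : 3 < ℓ) (hr : rank A = ℓ)
    (m : (Fin ℓ → K) → ℕ) (hm : ∀ c ∈ A.hyps, 0 < m c)
    (cH cL : Fin ℓ → K) (hne : cH ≠ cL)
    (hH : IsLocallyHeavy A m cH) (hL : IsLocallyHeavy A m cL)
    (U : Submodule K (Fin ℓ → K)) (hU : IsFlatOfRank A U 3)
    (hHU : cH ∈ U) (hLU : cL ∈ U)
    (hirr : ¬ ∃ W₁ W₂ : Submodule K (Fin ℓ → K), W₁ ≤ U ∧ W₂ ≤ U ∧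
      W₁ ≠ ⊥ ∧ W₂ ≠ ⊥ ∧ W₁ ⊓ W₂ = ⊥ ∧ W₁ ⊔ W₂ = U ∧
      ∀ c ∈ locHyps A U, c ∈ W₁ ∨ c ∈ W₂) :
    ¬ IsFree A m := by
  rintro ⟨-, θ, -, hθ⟩
  obtain ⟨η, G, hη, hηH, hηL, hG⟩ :=
    hθ.exists_logDer hne hH (hm _ hH.1) hL (hm _ hL.1)
  have hspan : Submodule.span K {cH, cL} ≤ U := by
    rw [Submodule.span_le]
    rintro d (rfl | rfl) <;> assumption
  obtain ⟨z, hzU, hz⟩ : ∃ z ∈ U, z ∉ Submodule.span K {cH, cL} := by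
    by_contra! hall
    have h2 := (isFlatOfRank_span_pair A hH.1 hL.1 hne).1
    rw [le_antisymm hspan hall, hU.1] at h2
    omega
  have hli : LinearIndependent K ![z, cH, cL] := by
    refine linearIndependent_finCons.mpr ⟨?_, by rwa [Matrix.range_cons_cons_empty]⟩
    rw [LinearIndependent.pair_iff' (A.ne_zero cH hH.1)]
    exact fun a ha => A.nonparallel cH hH.1 cL hL.1 hne a ha.symm
  have hind : ∀ x y w : K, x • z + y • cH + w • cL = 0 → x = 0 ∧ y = 0 ∧ w = 0 := by
    intro x y w h
    have h1 := Fintype.linearIndependent_iff.mp hli ![x, y, w]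
      (by simpa [Fin.sum_univ_three] using h)
    exact ⟨h1 0, h1 1, h1 2⟩
  have hUspan : U = Submodule.span K {z, cH, cL} := by
    refine (Submodule.eq_of_le_of_finrank_eq ?_ ?_).symm
    · rw [Submodule.span_le]
      rintro d (rfl | rfl | rfl) <;> assumption
    · have h3 := finrank_span_eq_card hli
      rw [Matrix.range_cons, Matrix.range_cons_cons_empty, Set.singleton_union] at h3
      rw [h3, hU.1, Fintype.card_fin]
  have hcoord : ∀ c : {c // c ∈ locHyps A U ∧ c ≠ cH ∧ c ≠ cL}, ∃ d a b : K,
      d ≠ 0 ∧ c.1 = d • (z + a • cH + b • cL) := by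
    rintro ⟨c, hc, hcH, hcL⟩
    obtain ⟨hcA, hcU⟩ := Finset.mem_filter.mp hc
    rw [hUspan] at hcU
    obtain ⟨d, a, b, rfl⟩ := Submodule.mem_span_triple.mp hcU
    have hd : d ≠ 0 := by
      rintro rfl
      exact notMem_span_pair_of_locallyHeavy hm hne hH hL hcA hcH hcL
        (Submodule.mem_span_pair.mpr ⟨a, b, by simp⟩)
    refine ⟨d, d⁻¹ * a, d⁻¹ * b, hd, ?_⟩
    simp only [smul_add, smul_smul, mul_inv_cancel_left₀ hd]
  choose d a b hd hc using hcoord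
  have hdvd : ∀ c, linForm (z + a c • cH + b c • cL) ∣ η (linForm (z + a c • cH + b c • cL)) := by
    intro c
    have hcA := (Finset.mem_filter.mp c.2.1).1
    have h1 := (dvd_pow_self _ (hm _ hcA).ne').trans (hη c.1 hcA)
    rw [hc c, linForm_smul, ← smul_eq_C_mul, Derivation.map_smul, smul_eq_C_mul,
      smul_eq_C_mul] at h1
    have hu : IsUnit (C (d c) : S K ℓ) := (IsUnit.mk0 _ (hd c)).map C
    rwa [hu.mul_left_dvd, hu.dvd_mul_left] at h1
  have hab : ∀ c c', a c = a c' ∨ b c = b c' := by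
    intro c c'
    by_contra! hcon
    obtain ⟨x, y, hxy⟩ := Submodule.mem_span_pair.mp
      (mem_span_pair_of_linForm_dvd hηH hηL hG (hdvd c) (hdvd c') hcon.2)
    obtain ⟨h1, h2, h3⟩ := hind (x + y) (x * a c + y * a c') (x * b c + y * b c' - 1) (by
      rw [← sub_eq_zero] at hxy
      rw [← hxy]
      module)
    have hy : y = -x := by linear_combination h1
    subst hy
    have hx : x = 0 := by
      refine (mul_eq_zero.mp ?_).resolve_right (sub_ne_zero.mpr hcon.1)
      linear_combination h2
    subst hx
    simp at h3
  -- a splitting of `U` into the line spanned by `p` and the plane spanned by `q` and `z + e p`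
  have hsplit : ∀ p q : Fin ℓ → K, p ∈ U → q ∈ U → p ≠ 0 → q ≠ 0 →
      (∀ x y w : K, x • z + y • p + w • q = 0 → x = 0 ∧ y = 0 ∧ w = 0) →
      U = Submodule.span K {z, p, q} →
      ∀ e : K, (∀ c ∈ locHyps A U, c = p ∨ c = q ∨ ∃ x y : K, c = x • (z + e • p) + y • q) →
      False := by
    intro p q hpU hqU hp hq hpq hUpq e hall
    refine hirr ⟨Submodule.span K {p}, Submodule.span K {z + e • p, q}, ?_, ?_, ?_, ?_, ?_, ?_, ?_⟩
    · simpa [Submodule.span_le] using hpU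
    · rw [Submodule.span_le]
      rintro _ (rfl | rfl)
      · exact U.add_mem hzU (U.smul_mem _ hpU)
      · exact hqU
    · simpa [Submodule.span_singleton_eq_bot] using hp
    · intro hbot
      rw [Submodule.span_eq_bot] at hbot
      exact hq (hbot q (by simp))
    · rw [Submodule.eq_bot_iff]
      rintro _ ⟨h1, h2⟩
      obtain ⟨y, rfl⟩ := Submodule.mem_span_singleton.mp h1
      obtain ⟨x, w, hxw⟩ := Submodule.mem_span_pair.mp h2
      obtain ⟨hx, hy, -⟩ := hpq x (x * e - y) w (by
        rw [← sub_eq_zero] at hxw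
        rw [← hxw]
        module)
      rw [hx, zero_mul, zero_sub, neg_eq_zero] at hy
      rw [hy, zero_smul]
    · rw [← Submodule.span_union, hUpq]
      apply le_antisymm <;> rw [Submodule.span_le]
      · rintro _ (rfl | rfl | rfl)
        · exact Submodule.mem_span_triple.mpr ⟨0, 1, 0, by simp⟩
        · exact Submodule.mem_span_triple.mpr ⟨1, e, 0, by simp⟩
        · exact Submodule.mem_span_triple.mpr ⟨0, 0, 1, by simp⟩
      · rw [Set.singleton_union]
        rintro _ (rfl | rfl | rfl)
        · exact Submodule.mem_span_triple.mpr ⟨-e, 1, 0, by module⟩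
        · exact Submodule.mem_span_triple.mpr ⟨1, 0, 0, by simp⟩
        · exact Submodule.mem_span_triple.mpr ⟨0, 0, 1, by simp⟩
    · intro c hcU
      rcases hall c hcU with rfl | rfl | ⟨x, y, rfl⟩
      · exact Or.inl (Submodule.mem_span_singleton_self c)
      · exact Or.inr (Submodule.subset_span (by simp))
      · exact Or.inr (Submodule.mem_span_pair.mpr ⟨x, y, rfl⟩)
  have hconst : ∀ f : {c // c ∈ locHyps A U ∧ c ≠ cH ∧ c ≠ cL} → K,
      (∀ c c', f c = f c') → ∃ e, ∀ c, f c = e := by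
    intro f hf
    by_cases hne : Nonempty {c // c ∈ locHyps A U ∧ c ≠ cH ∧ c ≠ cL}
    · exact ⟨f hne.some, fun c => hf c _⟩
    · exact ⟨0, fun c => (hne ⟨c⟩).elim⟩
  rcases forall_eq_or_forall_eq hab with hall | hall
  · obtain ⟨e, he⟩ := hconst a hall
    refine hsplit cH cL hHU hLU (A.ne_zero _ hH.1) (A.ne_zero _ hL.1) hind hUspan e
      fun c hcU => ?_
    by_cases hcH : c = cH
    · exact Or.inl hcH
    by_cases hcL : c = cL
    · exact Or.inr (Or.inl hcL)
    have h1 := hc ⟨c, hcU, hcH, hcL⟩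
    rw [he] at h1
    exact Or.inr (Or.inr ⟨_, _, h1.trans (by rw [smul_add, smul_smul])⟩)
  · obtain ⟨e, he⟩ := hconst b hall
    refine hsplit cL cH hLU hHU (A.ne_zero _ hL.1) (A.ne_zero _ hH.1)
      (fun x y w h => ?_) ?_ e fun c hcU => ?_
    · obtain ⟨h1, h2, h3⟩ := hind x w y (by rw [← h]; abel)
      exact ⟨h1, h3, h2⟩
    · rw [hUspan, Set.pair_comm]
    by_cases hcL : c = cL
    · exact Or.inl hcL
    by_cases hcH : c = cH
    · exact Or.inr (Or.inl hcH)
    have h1 := hc ⟨c, hcU, hcH, hcL⟩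
    rw [he, add_right_comm] at h1
    exact Or.inr (Or.inr ⟨_, _, h1.trans (by rw [smul_add, smul_smul])⟩)

end ArrPaper
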